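/- Let G be a d-dimensional simplicial complex on vertex set Fin n with incidence matrix ∂ and Laplacian matrix L_G = ∂ · ∂ᵀ. For each rooted forest (F,R) of G fix a bijective enumeration α : Fin m → R̄ and β : Fin m → F where m = |R̄| = |F|. Then, as an identity in ℤ[x], Σ over all quadruples (F,R,φ,φ') with (F,R) a rooted forest of G and φ, φ' fitting orientations of (F,R) of sign(π_{α,β,φ}) · sign(π_{α,β,φ'}) · (Π_{r ∈ R̄} ∂[r,φ(r)] · ∂[r,φ'(r)]) · x^{|R|} = det(L_G + x·Id). -/

import Mathlib

open Finset

/-- `G` is a `d`-dimensional simplicial complex on vertex set `Fin n`. -/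
def IsComplex (n d : ℕ) (G : Finset (Finset (Fin n))) : Prop :=
  (∀ f ∈ G, ∀ g ⊆ f, g ∈ G) ∧ (∀ f ∈ G, f.card ≤ d + 1) ∧ ∃ f ∈ G, f.card = d + 1

/-- The `k`-dimensional faces of `G` (faces of cardinality `k+1`). -/
def faces {n : ℕ} (G : Finset (Finset (Fin n))) (k : ℕ) : Finset (Finset (Fin n)) :=
  G.filter fun f => f.card = k + 1

/-- Incidence entry `∂[r,f]`: equals `(-1)^j` if `r` is obtained from `f` by deleting
its `j`-th smallest element (indexing from 0), and `0` if `r ⊄ f`. -/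
def incEntry {n : ℕ} (r f : Finset (Fin n)) : ℤ :=
  if r ⊆ f then
    (-1 : ℤ) ^ ((f \ r).sum fun v => (f.filter fun w => w < v).card)
  else 0

/-- `F` is a forest of the `d`-dimensional complex `G`: the columns of the incidence
matrix indexed by `F` are linearly independent over `ℚ`. -/
def IsForest (n d : ℕ) (G F : Finset (Finset (Fin n))) : Prop :=
  F ⊆ faces G d ∧
    LinearIndependent ℚ fun f : F => fun r : faces G (d - 1) => (incEntry r.1 f.1 : ℚ)

/-- `R` is a root of `F`: the rows indexed by `R̄ = G_{d-1} \ R` of the submatrix of the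
incidence matrix with column set `F` are linearly independent and span the row space of
that submatrix. -/
def IsRoot (n d : ℕ) (G F R : Finset (Finset (Fin n))) : Prop :=
  R ⊆ faces G (d - 1) ∧
    LinearIndependent ℚ
      (fun r : (faces G (d - 1) \ R : Finset (Finset (Fin n))) =>
        fun f : F => (incEntry r.1 f.1 : ℚ)) ∧
    Submodule.span ℚ
        (Set.range fun r : (faces G (d - 1) \ R : Finset (Finset (Fin n))) =>
          fun f : F => (incEntry r.1 f.1 : ℚ)) =
      Submodule.span ℚ
        (Set.range fun r : (faces G (d - 1) : Finset (Finset (Fin n))) =>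
          fun f : F => (incEntry r.1 f.1 : ℚ))

/-- `(F,R)` is a rooted forest of the `d`-dimensional complex `G`. -/
def IsRootedForest (n d : ℕ) (G F R : Finset (Finset (Fin n))) : Prop :=
  IsForest n d G F ∧ IsRoot n d G F R


/-- The incidence matrix `∂` of the `d`-dimensional complex `G`. -/
def incMatrix (n d : ℕ) (G : Finset (Finset (Fin n))) :
    Matrix (faces G (d - 1) : Finset (Finset (Fin n)))
      (faces G d : Finset (Finset (Fin n))) ℤ :=
  Matrix.of fun r f => incEntry r.1 f.1

/-- The Laplacian matrix `L_G = ∂ · ∂ᵀ`. -/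
def lapMat (n d : ℕ) (G : Finset (Finset (Fin n))) :
    Matrix (faces G (d - 1) : Finset (Finset (Fin n)))
      (faces G (d - 1) : Finset (Finset (Fin n))) ℤ :=
  incMatrix n d G * (incMatrix n d G).transpose

/-!
Expanding `det (L + x • 1)` multilinearly gives the principal minors of `L = ∂ ∂ᵀ`, the minor on the
rows `R̄` carrying `x ^ #R`. Cauchy–Binet writes such a minor as the sum over column sets `F` of
`(det ∂_{R̄,F})²`; the square is nonzero only if `(F, R)` is a rooted forest, and the Leibniz
expansion of its two factors is indexed by pairs of bijections `R̄ ≃ F`, of which only the fitting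
orientations contribute.
-/

section Determinant

variable {m n k ι R : Type*} [Fintype m] [DecidableEq m] [CommRing R]

theorem det_add_smul_one_eq_sum_principal_minors (M : Matrix m m R) (x : R) :
    (M + x • 1).det = ∑ S : Finset m, (M.submatrix ((↑) : S → m) (↑)).det * x ^ #Sᶜ := by
  have expand := Matrix.detRowAlternating.map_add_univ M.row (x • (1 : Matrix m m R)).row
  refine expand.trans (sum_congr rfl fun S _ => ?_)
  have pull_out : S.piecewise M.row (x • (1 : Matrix m m R)).row =
      fun i => (if i ∈ Sᶜ then x else 1) • S.piecewise M.row (1 : Matrix m m R).row i := by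
    ext i j
    by_cases hi : i ∈ S <;> simp [hi, Matrix.row, Finset.piecewise]
  rw [pull_out, AlternatingMap.map_smul_univ, ← Matrix.det_piecewise_one_eq_submatrix_det,
    prod_ite_mem, univ_inter, prod_const, smul_eq_mul, mul_comm]
  rfl

theorem det_submatrix_add_smul_one_eq_sum_powerset [DecidableEq ι] (L : Matrix ι ι R)
    (A : Finset ι) (x : R) :
    (L.submatrix ((↑) : A → ι) (↑) + x • 1).det =
      ∑ T ∈ A.powerset, (L.submatrix ((↑) : ↥(A \ T) → ι) (↑)).det * x ^ #T := by
  rw [det_add_smul_one_eq_sum_principal_minors]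
  refine sum_bij' (fun S _ => A \ S.map (.subtype _)) (fun T _ => (A \ T).subtype (· ∈ A))
    (by simp) (by simp) (fun S _ => by ext ⟨a, ha⟩; simp [ha]) (fun T hT => ?_) fun S _ => ?_
  · rw [subtype_map_of_mem fun a ha => (mem_sdiff.1 ha).1,
      Finset.sdiff_sdiff_eq_self (mem_powerset.1 hT)]
  · have hSA : S.map (.subtype _) ⊆ A := map_subtype_subset S
    rw [Finset.sdiff_sdiff_eq_self hSA, card_sdiff_of_subset hSA, card_map, card_compl,
      Fintype.card_coe, ← Matrix.det_submatrix_equiv_self (equivMap (.subtype _) S)]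
    rfl

theorem det_submatrix_id_equiv [Fintype k] [DecidableEq k] (N : Matrix m n R) (a : k ≃ m)
    (b : k ≃ n) (φ : m ≃ n) :
    (N.submatrix id φ).det =
      ((Equiv.Perm.sign ((a.trans φ).trans b.symm) : ℤ) : R) * (N.submatrix a b).det := by
  rw [← Matrix.det_permute', ← Matrix.det_submatrix_equiv_self a]
  simp [Matrix.submatrix_submatrix, Function.comp_def]

theorem linearIndependent_row_of_det_ne_zero [IsDomain R] (M : Matrix m n R)
    (φ : m ≃ n) (h : (M.submatrix id φ).det ≠ 0) : LinearIndependent R M.row :=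
  .of_comp (LinearMap.funLeft R R φ) (Matrix.linearIndependent_rows_of_det_ne_zero h)

theorem linearIndependent_col_of_det_ne_zero [IsDomain R] (M : Matrix m n R)
    (φ : m ≃ n) (h : (M.submatrix id φ).det ≠ 0) : LinearIndependent R M.col :=
  (linearIndependent_equiv φ).1 (Matrix.linearIndependent_cols_of_det_ne_zero h)

variable [DecidableEq n]

theorem sum_piFinset_eq_sum_powerset_sum_equiv {N : Type*} [AddCommMonoid N] (B : Finset n)
    (g : (m → n) → N) (hg : ∀ p, ¬ Function.Injective p → g p = 0) :
    ∑ p ∈ Fintype.piFinset (fun _ : m => B), g p =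
      ∑ F ∈ B.powerset, ∑ φ : m ≃ F, g (fun i => φ i) := by
  rw [sum_sigma']
  symm
  refine sum_of_injOn (fun q i => q.2 i) ?_ ?_ ?_ fun _ _ => rfl
  · rintro ⟨F, φ⟩ - ⟨F', φ'⟩ - h
    obtain rfl : F = F' := by
      have hrange : Set.range (Subtype.val ∘ φ) = Set.range (Subtype.val ∘ φ') :=
        congrArg Set.range h
      simpa [EquivLike.range_comp, SetLike.ext_iff, Set.ext_iff, Finset.ext_iff] using hrange
    obtain rfl : φ = φ' := Equiv.ext fun i => Subtype.ext (congrFun h i)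
    rfl
  · rintro ⟨F, φ⟩ hF
    have hFB : F ⊆ B := mem_powerset.1 (mem_sigma.1 hF).1
    exact Fintype.mem_piFinset.2 fun i => hFB (φ i).2
  · intro p hp hp_not_mem
    refine hg p fun hinj => hp_not_mem ?_
    have hFB : univ.image p ⊆ B := image_subset_iff.2 fun i _ => Fintype.mem_piFinset.1 hp i
    let φ : m ≃ univ.image p :=
      (Equiv.ofInjective p hinj).trans (Equiv.setCongr (by simp))
    exact ⟨⟨univ.image p, φ⟩, mem_sigma.2 ⟨mem_powerset.2 hFB, mem_univ φ⟩, rfl⟩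

theorem det_sum_mul_eq_sum_powerset_sum_equiv (M N : Matrix m n R) (B : Finset n) :
    (Matrix.of fun i j => ∑ b ∈ B, M i b * N j b).det =
      ∑ F ∈ B.powerset, ∑ φ : m ≃ F,
        (∏ i, M i (φ i)) * (N.submatrix id fun i => (φ i : n)).det := by
  have rows : (Matrix.of fun i j => ∑ b ∈ B, M i b * N j b).row =
      fun i => ∑ b ∈ B, M i b • N.col b := by
    ext i j
    simp [Matrix.row]
  have expand := Matrix.detRowAlternating.toMultilinearMap.map_sum_finset
    (fun i b => M i b • N.col b) (fun _ : m => B)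
  calc _ = ∑ p ∈ Fintype.piFinset fun _ : m => B,
          (∏ i, M i (p i)) * (N.submatrix id p).det := by
        refine (congrArg Matrix.detRowAlternating rows).trans (expand.trans ?_)
        refine sum_congr rfl fun p _ => (MultilinearMap.map_smul_univ _ _ _).trans ?_
        rw [← Matrix.det_transpose (N.submatrix id p)]
        rfl
    _ = _ := by
        refine sum_piFinset_eq_sum_powerset_sum_equiv B _ fun p hp => mul_eq_zero_of_right _ ?_
        obtain ⟨i, j, hij, hne⟩ := Function.not_injective_iff.1 hp
        exact Matrix.det_zero_of_column_eq hne fun r => congrArg (N r) hij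

theorem det_submatrix_mul_transpose_add_X_eq_sum_sum_equiv [DecidableEq ι] (M N : Matrix ι n R)
    (A : Finset ι) (B : Finset n) :
    ((M.submatrix ((↑) : A → ι) ((↑) : B → n) *
          (N.submatrix ((↑) : A → ι) ((↑) : B → n)).transpose).map Polynomial.C +
        (Polynomial.X : Polynomial R) • 1).det =
      ∑ T ∈ A.powerset, ∑ F ∈ B.powerset,
        Polynomial.C (∑ φ : ↥(A \ T) ≃ F,
          (∏ r : ↥(A \ T), M r (φ r)) * (N.submatrix (↑) fun r => (φ r : n)).det) *
            Polynomial.X ^ #T := by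
  let L : Matrix ι ι R := Matrix.of fun i j => ∑ b ∈ B, M i b * N j b
  have product_eq : M.submatrix ((↑) : A → ι) ((↑) : B → n) *
      (N.submatrix ((↑) : A → ι) ((↑) : B → n)).transpose = L.submatrix (↑) (↑) := by
    ext i j
    exact sum_coe_sort B fun b => M i b * N j b
  rw [product_eq, ← Matrix.submatrix_map, det_submatrix_add_smul_one_eq_sum_powerset]
  refine sum_congr rfl fun T _ => ?_
  rw [← sum_mul, ← map_sum, Matrix.submatrix_map, ← RingHom.mapMatrix_apply, ← RingHom.map_det]
  congr 2
  exact det_sum_mul_eq_sum_powerset_sum_equiv (M.submatrix ((↑) : ↥(A \ T) → ι) id)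
    (N.submatrix ((↑) : ↥(A \ T) → ι) id) B

variable [Fintype n] [Fintype k] [DecidableEq k]

theorem det_submatrix_equiv_equiv (M : Matrix m n R) (a : k ≃ m) (b : k ≃ n) :
    (M.submatrix a b).det =
      ∑ φ : m ≃ n, ((Equiv.Perm.sign ((a.trans φ).trans b.symm) : ℤ) : R) * ∏ r, M r (φ r) := by
  rw [← Matrix.det_transpose, Matrix.det_apply']
  refine Fintype.sum_equiv (a.equivCongr b) _ _ fun σ => ?_
  have conj : (a.trans (a.equivCongr b σ)).trans b.symm = σ := Equiv.ext fun i => by simp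
  rw [conj, ← Equiv.prod_comp a]
  simp

theorem det_submatrix_equiv_equiv_eq_sum_filter (M : Matrix m n R) (fits : m → n → Prop)
    [DecidableRel fits] (h_fits : ∀ r f, M r f ≠ 0 → fits r f) (a : k ≃ m) (b : k ≃ n) :
    (M.submatrix a b).det =
      ∑ φ : m ≃ n with ∀ r, fits r (φ r),
        ((Equiv.Perm.sign ((a.trans φ).trans b.symm) : ℤ) : R) * ∏ r, M r (φ r) := by
  rw [det_submatrix_equiv_equiv, sum_filter_of_ne]
  intro φ _ hφ r
  exact h_fits r _ fun h0 => hφ (mul_eq_zero_of_right _ (prod_eq_zero (mem_univ r) h0))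

theorem sum_equiv_prod_mul_det (M N : Matrix m n R) (a : k ≃ m) (b : k ≃ n) :
    ∑ φ : m ≃ n, (∏ r, M r (φ r)) * (N.submatrix id φ).det =
      (M.submatrix a b).det * (N.submatrix a b).det := by
  simp_rw [det_submatrix_id_equiv N a b, det_submatrix_equiv_equiv M a b, sum_mul]
  exact sum_congr rfl fun φ _ => by ring

theorem sum_sum_filter_sign_mul_sign_mul_prod (M : Matrix m n R) (fits : m → n → Prop)
    [DecidableRel fits] (h_fits : ∀ r f, M r f ≠ 0 → fits r f) (a : k ≃ m) (b : k ≃ n) :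
    ∑ φ : m ≃ n with ∀ r, fits r (φ r), ∑ φ' : m ≃ n with ∀ r, fits r (φ' r),
        ((Equiv.Perm.sign ((a.trans φ).trans b.symm) : ℤ) : R) *
          ((Equiv.Perm.sign ((a.trans φ').trans b.symm) : ℤ) : R) *
          ∏ r, M r (φ r) * M r (φ' r) =
      (M.submatrix a b).det * (M.submatrix a b).det := by
  simp_rw [det_submatrix_equiv_equiv_eq_sum_filter M fits h_fits, sum_mul_sum,
    prod_mul_distrib, mul_mul_mul_comm]

end Determinant

section RootedForest

variable {ι κ R K : Type*} [Field K]

/-- The analogue of `IsForest` for a matrix `M` restricted to the rows `A` and the columns `B`. -/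
def IsMatrixForest (M : Matrix ι κ K) (A : Finset ι) (B F : Finset κ) : Prop :=
  F ⊆ B ∧ LinearIndependent K fun f : F => fun r : A => M r f

variable [DecidableEq ι]

/-- The analogue of `IsRoot` for a matrix `M` restricted to the rows `A`: the rows in `A \ T` form a
basis of the row space of the columns `F`. -/
def IsMatrixRoot (M : Matrix ι κ K) (A : Finset ι) (F : Finset κ) (T : Finset ι) : Prop :=
  T ⊆ A ∧ LinearIndependent K (fun r : ↥(A \ T) => fun f : F => M r f) ∧
    Submodule.span K (Set.range fun r : ↥(A \ T) => fun f : F => M r f) =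
      Submodule.span K (Set.range fun r : A => fun f : F => M r f)

/-- The analogue of `IsRootedForest` for a matrix `M` restricted to the rows `A` and the columns
`B`. -/
def IsRootedMatrixForest (M : Matrix ι κ K) (A : Finset ι) (B F : Finset κ) (T : Finset ι) : Prop :=
  IsMatrixForest M A B F ∧ IsMatrixRoot M A F T

theorem isMatrixForest_of_det_ne_zero {M : Matrix ι κ K} {A S : Finset ι} {B F : Finset κ}
    (hF : F ⊆ B) (hS : S ⊆ A) (φ : S ≃ F) (h : (M.submatrix (↑) fun r => (φ r : κ)).det ≠ 0) :
    IsMatrixForest M A B F :=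
  ⟨hF, .of_comp (LinearMap.funLeft K K (Set.inclusion hS))
    (linearIndependent_col_of_det_ne_zero (M.submatrix ((↑) : S → ι) ((↑) : F → κ)) φ h)⟩

theorem isMatrixRoot_of_det_ne_zero {M : Matrix ι κ K} {A T : Finset ι} {F : Finset κ}
    (hT : T ⊆ A) (φ : ↥(A \ T) ≃ F) (h : (M.submatrix (↑) fun r => (φ r : κ)).det ≠ 0) :
    IsMatrixRoot M A F T := by
  have rows_indep : LinearIndependent K fun r : ↥(A \ T) => fun f : F => M r f :=
    linearIndependent_row_of_det_ne_zero (M.submatrix ((↑) : ↥(A \ T) → ι) ((↑) : F → κ)) φ h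
  have rows_span := rows_indep.span_eq_top_of_card_eq_finrank'
    ((Fintype.card_congr φ).trans (Module.finrank_fintype_fun_eq_card K).symm)
  refine ⟨hT, rows_indep, rows_span.trans (top_unique ?_).symm⟩
  rw [← rows_span]
  exact Submodule.span_mono (Set.range_subset_iff.2 fun r => ⟨⟨r, sdiff_subset r.2⟩, rfl⟩)

theorem isRootedMatrixForest_of_det_ne_zero [CommRing R] [Algebra R K] [FaithfulSMul R K]
    {M : Matrix ι κ R} {A T : Finset ι} {B F : Finset κ} (hF : F ⊆ B) (hT : T ⊆ A)
    (φ : ↥(A \ T) ≃ F) (h : (M.submatrix (↑) fun r => (φ r : κ)).det ≠ 0) :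
    IsRootedMatrixForest (M.map (algebraMap R K)) A B F T := by
  have h_map : ((M.map (algebraMap R K)).submatrix (↑) fun r => (φ r : κ)).det ≠ 0 := by
    rw [Matrix.submatrix_map, ← RingHom.mapMatrix_apply, ← RingHom.map_det]
    exact (map_ne_zero_iff _ (FaithfulSMul.algebraMap_injective R K)).2 h
  exact ⟨isMatrixForest_of_det_ne_zero hF sdiff_subset φ h_map,
    isMatrixRoot_of_det_ne_zero hT φ h_map⟩

end RootedForest

open scoped Classical in
theorem sum_bidirected_rootedForests_eq_det_lap_add_X_general {ι κ R K : Type*} [DecidableEq ι]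
    [DecidableEq κ] [CommRing R] [Field K] [Algebra R K] [FaithfulSMul R K] (M : Matrix ι κ R)
    (fits : ι → κ → Prop) [DecidableRel fits] (h_fits : ∀ r f, M r f ≠ 0 → fits r f)
    (A : Finset ι) (B : Finset κ) (α : ∀ T : Finset ι, Fin (#(A \ T)) ≃ ↥(A \ T))
    (β : ∀ F T, IsRootedMatrixForest (M.map (algebraMap R K)) A B F T → (Fin (#(A \ T)) ≃ F)) :
    (∑ F ∈ B.powerset, ∑ T ∈ A.powerset,
        if h : IsRootedMatrixForest (M.map (algebraMap R K)) A B F T then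
          ∑ φ : ↥(A \ T) ≃ F with ∀ r : ↥(A \ T), fits r (φ r),
            ∑ φ' : ↥(A \ T) ≃ F with ∀ r : ↥(A \ T), fits r (φ' r),
              Polynomial.C
                  (((Equiv.Perm.sign (((α T).trans φ).trans (β F T h).symm) : ℤ) : R) *
                    ((Equiv.Perm.sign (((α T).trans φ').trans (β F T h).symm) : ℤ) : R) *
                    ∏ r : ↥(A \ T), M r (φ r) * M r (φ' r)) *
                Polynomial.X ^ #T
        else 0) =
      ((M.submatrix ((↑) : A → ι) ((↑) : B → κ) *
          (M.submatrix ((↑) : A → ι) ((↑) : B → κ)).transpose).map Polynomial.C +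
        (Polynomial.X : Polynomial R) • 1).det := by
  rw [det_submatrix_mul_transpose_add_X_eq_sum_sum_equiv, sum_comm]
  refine sum_congr rfl fun T hT => sum_congr rfl fun F hF => ?_
  rw [mem_powerset] at hT hF
  split_ifs with h
  · simp_rw [← sum_mul, ← map_sum]
    congr 2
    let N : Matrix ↥(A \ T) F R := M.submatrix (↑) (↑)
    exact (sum_sum_filter_sign_mul_sign_mul_prod N (fun r f => fits r f)
      (fun r f => h_fits r f) (α T) (β F T h)).trans (sum_equiv_prod_mul_det N N _ _).symm
  · have det_eq_zero (φ : ↥(A \ T) ≃ F) : (M.submatrix (↑) fun r => (φ r : κ)).det = 0 :=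
      of_not_not fun hdet => h (isRootedMatrixForest_of_det_ne_zero hF hT φ hdet)
    simp [det_eq_zero]

open scoped Classical in
/-- As an identity in `ℤ[x]`, the sum over all quadruples
`(F,R,φ,φ')`, with `(F,R)` a rooted forest of `G` and `φ, φ'` fitting orientations of
`(F,R)`, of `sign(π_{α,β,φ})·sign(π_{α,β,φ'})·(Π_{r∈R̄} ∂[r,φ(r)]·∂[r,φ'(r)])·x^{|R|}`
equals `det(L_G + x·Id)`; here a bijective enumeration `α : Fin m ≃ R̄`,
`β : Fin m ≃ F` is fixed for each rooted forest. -/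
theorem sum_bidirected_rootedForests_eq_det_lap_add_X
    (n d : ℕ) (hn : 1 ≤ n) (hd : 1 ≤ d)
    (G : Finset (Finset (Fin n))) (hG : IsComplex n d G)
    (α : ∀ R : Finset (Finset (Fin n)),
      Fin ((faces G (d - 1) \ R).card) ≃
        (faces G (d - 1) \ R : Finset (Finset (Fin n))))
    (β : ∀ F R : Finset (Finset (Fin n)), IsRootedForest n d G F R →
      (Fin ((faces G (d - 1) \ R).card) ≃ F)) :
    (∑ F ∈ (faces G d).powerset, ∑ R ∈ (faces G (d - 1)).powerset,
        if h : IsRootedForest n d G F R then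
          ∑ φ ∈ Finset.univ.filter
              (fun φ : (faces G (d - 1) \ R : Finset (Finset (Fin n))) ≃ F =>
                ∀ r, r.1 ⊆ (φ r).1),
            ∑ φ' ∈ Finset.univ.filter
                (fun φ' : (faces G (d - 1) \ R : Finset (Finset (Fin n))) ≃ F =>
                  ∀ r, r.1 ⊆ (φ' r).1),
              Polynomial.C
                  ((Equiv.Perm.sign (((α R).trans φ).trans (β F R h).symm) : ℤ) *
                    (Equiv.Perm.sign (((α R).trans φ').trans (β F R h).symm) : ℤ) *
                    ∏ r : (faces G (d - 1) \ R : Finset (Finset (Fin n))),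
                      incEntry r.1 (φ r).1 * incEntry r.1 (φ' r).1) *
                Polynomial.X ^ R.card
        else 0) =
      Matrix.det ((lapMat n d G).map Polynomial.C +
        (Polynomial.X : Polynomial ℤ) • (1 : Matrix _ _ (Polynomial ℤ))) := by
  exact sum_bidirected_rootedForests_eq_det_lap_add_X_general (K := ℚ) (Matrix.of incEntry)
    (· ⊆ ·) (fun _ _ h => of_not_not fun hsub => h (if_neg hsub)) _ _ α β
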